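/- Let ω = e^{2πi/3} ∈ ℂ. Define the 28 vectors in ℂ^4: 1=(1,ω,-1,0), 2=(-1,-1,ω,0), 3=(ω,1,-1,0), 4=(0,0,0,1), 5=(-1,ω,0,-1), 6=(ω,-1,0,1), 7=(1,-1,0,ω), 8=(0,0,1,0), 9=(ω,0,1,-1), A=(0,1,1,1), B=(ω²,0,ω,-1), C=(ω,0,ω²,-1), D=(1,0,1,-1), E=(0,1,0,0), F=(1,0,ω,-1), G=(0,1,ω,1), H=(1,-1,0,1), I=(0,ω,1,1), J=(0,1,1,ω), K=(1,0,0,0), L=(-1,0,-1,ω), M=(1,1,-1,0), N=(ω,-1,0,ω²), O=(ω²,-1,0,ω), P=(ω,ω²,-1,0), Q=(ω²,ω,-1,0), R=(0,1,ω,ω²), S=(0,1,ω²,ω). For each of the 14 quadruples 1234, 5678, 639A, BCDE, 2FGH, IGJK, L7JM, NOH8, 1I5D, DHMA, PQ4M, RSKA, L9FE, 4KE8, the four corresponding vectors are nonzero and pairwise orthogonal with respect to the standard Hermitian inner product on ℂ^4. -/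

import Mathlib

noncomputable def ω : ℂ := Complex.exp (2 * Real.pi * Complex.I / 3)

noncomputable def hdot (u v : Fin 4 → ℂ) : ℂ := ∑ i, (starRingEnd ℂ) (u i) * v i

noncomputable def v1 : Fin 4 → ℂ := ![1, ω, (-1), 0]
noncomputable def v2 : Fin 4 → ℂ := ![(-1), (-1), ω, 0]
noncomputable def v3 : Fin 4 → ℂ := ![ω, 1, (-1), 0]
noncomputable def v4 : Fin 4 → ℂ := ![0, 0, 0, 1]
noncomputable def v5 : Fin 4 → ℂ := ![(-1), ω, 0, (-1)]
noncomputable def v6 : Fin 4 → ℂ := ![ω, (-1), 0, 1]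
noncomputable def v7 : Fin 4 → ℂ := ![1, (-1), 0, ω]
noncomputable def v8 : Fin 4 → ℂ := ![0, 0, 1, 0]
noncomputable def v9 : Fin 4 → ℂ := ![ω, 0, 1, (-1)]
noncomputable def vA : Fin 4 → ℂ := ![0, 1, 1, 1]
noncomputable def vB : Fin 4 → ℂ := ![ω^2, 0, ω, (-1)]
noncomputable def vC : Fin 4 → ℂ := ![ω, 0, ω^2, (-1)]
noncomputable def vD : Fin 4 → ℂ := ![1, 0, 1, (-1)]
noncomputable def vE : Fin 4 → ℂ := ![0, 1, 0, 0]
noncomputable def vF : Fin 4 → ℂ := ![1, 0, ω, (-1)]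
noncomputable def vG : Fin 4 → ℂ := ![0, 1, ω, 1]
noncomputable def vH : Fin 4 → ℂ := ![1, (-1), 0, 1]
noncomputable def vI : Fin 4 → ℂ := ![0, ω, 1, 1]
noncomputable def vJ : Fin 4 → ℂ := ![0, 1, 1, ω]
noncomputable def vK : Fin 4 → ℂ := ![1, 0, 0, 0]
noncomputable def vL : Fin 4 → ℂ := ![(-1), 0, (-1), ω]
noncomputable def vM : Fin 4 → ℂ := ![1, 1, (-1), 0]
noncomputable def vN : Fin 4 → ℂ := ![ω, (-1), 0, ω^2]
noncomputable def vO : Fin 4 → ℂ := ![ω^2, (-1), 0, ω]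
noncomputable def vP : Fin 4 → ℂ := ![ω, ω^2, (-1), 0]
noncomputable def vQ : Fin 4 → ℂ := ![ω^2, ω, (-1), 0]
noncomputable def vR : Fin 4 → ℂ := ![0, 1, ω, ω^2]
noncomputable def vS : Fin 4 → ℂ := ![0, 1, ω^2, ω]

noncomputable def tuples : List (List (Fin 4 → ℂ)) :=
  [[v1, v2, v3, v4],
   [v5, v6, v7, v8],
   [v6, v3, v9, vA],
   [vB, vC, vD, vE],
   [v2, vF, vG, vH],
   [vI, vG, vJ, vK],
   [vL, v7, vJ, vM],
   [vN, vO, vH, v8],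
   [v1, vI, v5, vD],
   [vD, vH, vM, vA],
   [vP, vQ, v4, vM],
   [vR, vS, vK, vA],
   [vL, v9, vF, vE],
   [v4, vK, vE, v8]]

theorem omega_eq : ω = -1 / 2 + (Real.sqrt 3 / 2 : ℝ) * Complex.I := by
  have h : (2 * Real.pi * Complex.I / 3 : ℂ) = ((Real.pi - Real.pi / 3 : ℝ) : ℂ) * Complex.I := by
    push_cast
    ring
  rw [ω, h, Complex.exp_mul_I, ← Complex.ofReal_cos, ← Complex.ofReal_sin, Real.cos_pi_sub,
    Real.sin_pi_sub, Real.cos_pi_div_three, Real.sin_pi_div_three]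
  push_cast
  ring

theorem omega_sq : ω ^ 2 = -1 - ω := by
  have h3 : ((Real.sqrt 3 : ℝ) : ℂ) ^ 2 = 3 := by
    rw [← Complex.ofReal_pow, Real.sq_sqrt (by norm_num)]
    norm_num
  rw [omega_eq]
  push_cast
  linear_combination (1 / 4 * Complex.I ^ 2) * h3 + 3 / 4 * Complex.I_sq

theorem omega_conj : (starRingEnd ℂ) ω = -1 - ω := by
  rw [omega_eq]
  have hh : (starRingEnd ℂ) (2 : ℂ) = 2 := Complex.conj_ofNat 2
  simp only [map_add, map_mul, map_div₀, map_neg, map_one, hh, Complex.conj_ofReal, Complex.conj_I]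
  ring

theorem zp2814_ortho :
    ∀ t ∈ tuples, (∀ v ∈ t, v ≠ (0 : Fin 4 → ℂ)) ∧
      List.Pairwise (fun u v => hdot u v = 0) t := by
  have h2 := omega_sq
  have hc := omega_conj
  simp only [tuples, List.forall_mem_cons, List.pairwise_cons, hdot, Fin.sum_univ_four,
    v1, v2, v3, v4, v5, v6, v7, v8, v9, vA, vB, vC, vD, vE, vF, vG, vH, vI, vJ, vK, vL, vM,
    vN, vO, vP, vQ, vR, vS]
  simp [hc, h2]
  repeat' apply And.intro
  all_goals first
    | ring1
    | linear_combination h2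
    | linear_combination -h2
    | linear_combination 2 * h2
    | linear_combination (-2) * h2
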